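/- Let n ≥ 1 and 0 < α ≤ 1. There exists a constant C > 0, depending only on n and α, such that the following holds: let Q ⊆ ℝ^n be an axis-parallel cube with center c and side length ℓ(Q), let b ∈ L^1(ℝ^n) be supported in Q with ∫_{ℝ^n} b = 0, and let Q* = 2√n·Q be the concentric cube with side length 2√n·ℓ(Q). Then for every j ∈ ℤ_+ and every x ∉ Q*, S_{α,2^j}(b)(x) ≤ C · 2^{j(3n+2α)/2} · ℓ(Q)^α · |x-c|^{-(n+α)} · ∫_Q |b(z)| dz. -/

import Mathlib

/-! Since `∫ b = 0`, the kernel in `b * φ_t` may be replaced by its difference with its value at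
the centre `c`, and the Hölder condition gives
`A_α(b)(y,t) ≤ (√n ℓ / 2)^α t^{-(n+α)} ‖b‖₁` (`Aalpha_le`). If `(y,t)` lies in the cone of aperture
`β ≥ 1` at `x ∉ Q*` and `A_α(b)(y,t) ≠ 0`, then `y` is within `t` of some `z ∈ Q`, while
`|x - z| > |x - c| / 2`; hence `t > |x - c| / (4β)` (`Aalpha_eq_zero`). Inserting both facts,
the square of `S_{α,β}(b)(x)` is at most a constant times
`ℓ^{2α} ‖b‖₁² β^n ∫_{|x-c|/(4β)}^∞ t^{-2n-2α-1} dt`, where `β^n t^n` is the volume of the slice of the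
cone at height `t` (`lintegral_cone`). This equals a constant times
`ℓ^{2α} ‖b‖₁² β^{3n+2α} |x-c|^{-2n-2α}`; taking square roots with `β = 2^j` gives the claim. -/

open MeasureTheory Metric ENNReal Set

noncomputable section

/-- `ℝ^n` as a Euclidean space. -/
abbrev Rn (n : ℕ) := EuclideanSpace ℝ (Fin n)

/-- The weighted measure `w(E) = ∫_E w` of a set `E`. -/
def wMeas (n : ℕ) (w : Rn n → ℝ) (E : Set (Rn n)) : ℝ≥0∞ :=
  ∫⁻ x in E, ENNReal.ofReal (w x)

/-- The Muckenhoupt class `A_1`: `w` is a nonnegative locally integrable function with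
`|B|⁻¹ ∫_B w ≤ C · ess inf_B w` for all balls `B`. -/
def IsA1 (n : ℕ) (w : Rn n → ℝ) : Prop :=
  (∀ x, 0 ≤ w x) ∧ LocallyIntegrable w (volume : Measure (Rn n)) ∧
    ∃ C > 0, ∀ (x : Rn n) (r : ℝ), 0 < r →
      wMeas n w (ball x r) ≤
        ENNReal.ofReal C * volume (ball x r) *
          essInf (fun y => ENNReal.ofReal (w y)) ((volume : Measure (Rn n)).restrict (ball x r))

/-- The Muckenhoupt class `A_p` for `1 ≤ p < ∞` (for `p = 1` this is the `A_1` condition). -/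
def IsAp (n : ℕ) (p : ℝ) (w : Rn n → ℝ) : Prop :=
  (∀ x, 0 ≤ w x) ∧ LocallyIntegrable w (volume : Measure (Rn n)) ∧
    if p = 1 then
      ∃ C > 0, ∀ (x : Rn n) (r : ℝ), 0 < r →
        wMeas n w (ball x r) ≤
          ENNReal.ofReal C * volume (ball x r) *
            essInf (fun y => ENNReal.ofReal (w y)) ((volume : Measure (Rn n)).restrict (ball x r))
    else
      ∃ C > 0, ∀ (x : Rn n) (r : ℝ), 0 < r →
        wMeas n w (ball x r) *
          (∫⁻ y in ball x r, (ENNReal.ofReal (w y)) ^ (-(1 / (p - 1)))) ^ (p - 1) ≤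
            ENNReal.ofReal C * (volume (ball x r)) ^ p

/-- The reverse Hölder class `RH_r`:
`(|B|⁻¹ ∫_B w^r)^{1/r} ≤ C · |B|⁻¹ ∫_B w` for all balls `B`. -/
def IsRH (n : ℕ) (r : ℝ) (w : Rn n → ℝ) : Prop :=
  (∀ x, 0 ≤ w x) ∧ LocallyIntegrable w (volume : Measure (Rn n)) ∧
    ∃ C > 0, ∀ (x : Rn n) (ρ : ℝ), 0 < ρ →
      ((volume (ball x ρ))⁻¹ * ∫⁻ y in ball x ρ, (ENNReal.ofReal (w y)) ^ r) ^ (1 / r) ≤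
        ENNReal.ofReal C * ((volume (ball x ρ))⁻¹ * ∫⁻ y in ball x ρ, ENNReal.ofReal (w y))

/-- The family `C_α`: real functions supported in the unit ball, with vanishing integral,
satisfying the Hölder condition `|φ(x) - φ(x')| ≤ |x - x'|^α`. -/
def Calpha (n : ℕ) (α : ℝ) : Set (Rn n → ℝ) :=
  {φ | (∀ x : Rn n, 1 < ‖x‖ → φ x = 0) ∧ ((∫ x, φ x) = 0) ∧
    ∀ x x' : Rn n, |φ x - φ x'| ≤ ‖x - x'‖ ^ α}

/-- The convolution `(f * φ_t)(y)` where `φ_t(x) = t⁻ⁿ φ(x/t)`. -/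
def convPhi (n : ℕ) (φ : Rn n → ℝ) (t : ℝ) (f : Rn n → ℝ) (y : Rn n) : ℝ :=
  ∫ z, (t ^ n)⁻¹ * φ (t⁻¹ • (y - z)) * f z

/-- `A_α(f)(y,t) = sup_{φ ∈ C_α} |(f * φ_t)(y)|`. -/
def Aalpha (n : ℕ) (α : ℝ) (f : Rn n → ℝ) (y : Rn n) (t : ℝ) : ℝ≥0∞ :=
  ⨆ φ ∈ Calpha n α, ENNReal.ofReal |convPhi n φ t f y|

/-- The varying-aperture intrinsic square function `S_{α,β}(f)`. -/
def Sbeta (n : ℕ) (α β : ℝ) (f : Rn n → ℝ) (x : Rn n) : ℝ≥0∞ :=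
  (∫⁻ p : Rn n × ℝ in {p : Rn n × ℝ | 0 < p.2 ∧ dist x p.1 < β * p.2},
      (Aalpha n α f p.1 p.2) ^ 2 / ENNReal.ofReal (p.2 ^ (n + 1))) ^ (1 / 2 : ℝ)

/-- The intrinsic square function `S_α(f) = S_{α,1}(f)`. -/
def Salpha (n : ℕ) (α : ℝ) (f : Rn n → ℝ) (x : Rn n) : ℝ≥0∞ := Sbeta n α 1 f x

/-- The intrinsic `g^*_λ`-function `g^*_{λ,α}(f)`. -/
def gStar (n : ℕ) (α lam : ℝ) (f : Rn n → ℝ) (x : Rn n) : ℝ≥0∞ :=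
  (∫⁻ p : Rn n × ℝ in {p : Rn n × ℝ | 0 < p.2},
      ENNReal.ofReal ((p.2 / (p.2 + dist x p.1)) ^ (lam * n)) *
        (Aalpha n α f p.1 p.2) ^ 2 / ENNReal.ofReal (p.2 ^ (n + 1))) ^ (1 / 2 : ℝ)

/-- The intrinsic Littlewood–Paley `g`-function `g_α(f)`. -/
def galpha (n : ℕ) (α : ℝ) (f : Rn n → ℝ) (x : Rn n) : ℝ≥0∞ :=
  (∫⁻ t in Set.Ioi (0 : ℝ), (Aalpha n α f x t) ^ 2 / ENNReal.ofReal t) ^ (1 / 2 : ℝ)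

/-- The weighted Morrey norm `‖f‖_{L^{1,κ}(w)} = sup_B w(B)^{-κ} ∫_B |f| w`. -/
def morrey (n : ℕ) (κ : ℝ) (w f : Rn n → ℝ) : ℝ≥0∞ :=
  ⨆ (x : Rn n) (r : ℝ) (_ : 0 < r),
    (∫⁻ y in ball x r, ENNReal.ofReal |f y| * ENNReal.ofReal (w y)) /
      (wMeas n w (ball x r)) ^ κ

/-- The axis-parallel cube `Q(c, ℓ)` centered at `c` with side length `ℓ`. -/
def cube (n : ℕ) (c : Rn n) (ℓ : ℝ) : Set (Rn n) :=
  {x | ∀ i, |x i - c i| ≤ ℓ / 2}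

lemma norm_sub_le_of_mem_cube {n : ℕ} {c z : Rn n} {ℓ : ℝ} (hℓ : 0 < ℓ) (hz : z ∈ cube n c ℓ) :
    ‖z - c‖ ≤ Real.sqrt n * ℓ / 2 := by
  rw [EuclideanSpace.norm_eq]
  have h : ∑ i, ‖(z - c) i‖ ^ 2 ≤ n * (ℓ / 2) ^ 2 := by
    calc ∑ i, ‖(z - c) i‖ ^ 2 ≤ ∑ _i : Fin n, (ℓ / 2) ^ 2 := by
          refine Finset.sum_le_sum fun i _ => ?_
          have := hz i
          rw [PiLp.sub_apply, Real.norm_eq_abs]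
          gcongr
      _ = n * (ℓ / 2) ^ 2 := by simp
  calc Real.sqrt (∑ i, ‖(z - c) i‖ ^ 2) ≤ Real.sqrt (n * (ℓ / 2) ^ 2) := Real.sqrt_le_sqrt h
    _ = Real.sqrt n * ℓ / 2 := by
        rw [Real.sqrt_mul (by positivity), Real.sqrt_sq (by positivity)]; ring

lemma lt_norm_sub_of_notMem_cube {n : ℕ} {c x : Rn n} {ℓ : ℝ}
    (hx : x ∉ cube n c (2 * Real.sqrt n * ℓ)) : Real.sqrt n * ℓ < ‖x - c‖ := by
  simp only [cube, mem_ofPred_eq, not_forall, not_le] at hx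
  obtain ⟨i, hi⟩ := hx
  have := PiLp.norm_apply_le (x - c) i
  rw [PiLp.sub_apply, Real.norm_eq_abs] at this
  linarith

/-- Cancellation of `b` against the Hölder regularity of the kernel. -/
lemma Aalpha_le {n : ℕ} {α : ℝ} (hα : 0 < α) {c : Rn n} {ℓ : ℝ} (hℓ : 0 < ℓ)
    {b : Rn n → ℝ} (hb : Integrable b (volume : Measure (Rn n)))
    (hsupp : ∀ z, z ∉ cube n c ℓ → b z = 0) (h0 : (∫ z, b z) = 0) (y : Rn n) {t : ℝ} (ht : 0 < t) :
    Aalpha n α b y t ≤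
      ENNReal.ofReal ((Real.sqrt n * ℓ / 2) ^ α * t ^ (-((n : ℝ) + α))) *
        ∫⁻ z, ENNReal.ofReal |b z| := by
  refine iSup₂_le fun φ hφ => ?_
  obtain ⟨-, -, hH⟩ := hφ
  -- A non-integrable product would have integral `0` by convention, so no regularity of `φ`
  -- has to be established.
  by_cases hint : Integrable (fun z => (t ^ n)⁻¹ * φ (t⁻¹ • (y - z)) * b z) volume
  swap
  · rw [convPhi, integral_undef hint]; simp
  have hsub : convPhi n φ t b y =
      ∫ z, (t ^ n)⁻¹ * (φ (t⁻¹ • (y - z)) - φ (t⁻¹ • (y - c))) * b z := by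
    have h2 : (∫ z, (t ^ n)⁻¹ * φ (t⁻¹ • (y - c)) * b z) = 0 := by
      rw [integral_const_mul, h0, mul_zero]
    rw [convPhi, ← sub_zero (∫ z, (t ^ n)⁻¹ * φ (t⁻¹ • (y - z)) * b z), ← h2,
      ← integral_sub hint (hb.const_mul _)]
    congr 1; ext z; ring
  rw [hsub, ← Real.norm_eq_abs, ofReal_norm]
  refine (enorm_integral_le_lintegral_enorm _).trans ?_
  rw [← lintegral_const_mul' _ _ ENNReal.ofReal_ne_top]
  refine lintegral_mono fun z => ?_
  beta_reduce
  rw [← ofReal_norm, ← ENNReal.ofReal_mul (by positivity)]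
  refine ENNReal.ofReal_le_ofReal ?_
  by_cases hz : z ∈ cube n c ℓ
  swap
  · simp [hsupp z hz]
  rw [norm_mul, norm_mul, Real.norm_eq_abs (b z), Real.norm_of_nonneg (by positivity : 0 ≤ (t ^ n)⁻¹)]
  refine mul_le_mul_of_nonneg_right ?_ (abs_nonneg _)
  have h1 := hH (t⁻¹ • (y - z)) (t⁻¹ • (y - c))
  have h2 : ‖t⁻¹ • (y - z) - t⁻¹ • (y - c)‖ = t⁻¹ * ‖z - c‖ := by
    rw [← smul_sub, norm_smul, Real.norm_of_nonneg (by positivity), norm_sub_rev z c]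
    congr 2; abel
  rw [h2, Real.mul_rpow (by positivity) (by positivity)] at h1
  have h3 : ‖z - c‖ ^ α ≤ (Real.sqrt n * ℓ / 2) ^ α :=
    Real.rpow_le_rpow (norm_nonneg _) (norm_sub_le_of_mem_cube hℓ hz) hα.le
  have h4 : t ^ (-((n : ℝ) + α)) = (t ^ n)⁻¹ * t⁻¹ ^ α := by
    rw [neg_add, Real.rpow_add ht, Real.rpow_neg ht.le, Real.rpow_natCast, Real.inv_rpow ht.le,
      Real.rpow_neg ht.le]
  rw [h4, Real.norm_eq_abs]
  calc (t ^ n)⁻¹ * |φ (t⁻¹ • (y - z)) - φ (t⁻¹ • (y - c))|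
      ≤ (t ^ n)⁻¹ * (t⁻¹ ^ α * (Real.sqrt n * ℓ / 2) ^ α) := by
        gcongr
        exact h1.trans (by gcongr)
    _ = _ := by ring

/-- Points of the cone over a far point `x` at low height do not see the cube. -/
lemma Aalpha_eq_zero {n : ℕ} {α β : ℝ} (hβ : 1 ≤ β) {c x y : Rn n} {ℓ t : ℝ} (hℓ : 0 < ℓ)
    {b : Rn n → ℝ} (hsupp : ∀ z, z ∉ cube n c ℓ → b z = 0)
    (hx : x ∉ cube n c (2 * Real.sqrt n * ℓ)) (ht : 0 < t) (hxy : dist x y < β * t)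
    (htr : t ≤ ‖x - c‖ / (4 * β)) : Aalpha n α b y t = 0 := by
  refine le_antisymm (iSup₂_le fun φ hφ => ?_) (zero_le)
  have : convPhi n φ t b y = 0 := by
    rw [convPhi]
    refine integral_eq_zero_of_ae (Filter.Eventually.of_forall fun z => ?_)
    by_cases hz : z ∈ cube n c ℓ
    swap
    · simp [hsupp z hz]
    have h1 := norm_sub_le_of_mem_cube hℓ hz
    have h2 := lt_norm_sub_of_notMem_cube hx
    have h3 : ‖x - c‖ ≤ dist x y + ‖y - z‖ + ‖z - c‖ := by
      rw [dist_eq_norm]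
      calc ‖x - c‖ = ‖(x - y) + (y - z) + (z - c)‖ := by congr 1; abel
        _ ≤ _ := norm_add₃_le
    have h4 : t * (4 * β) ≤ ‖x - c‖ := (le_div_iff₀ (by positivity)).1 htr
    have h5 : t < ‖y - z‖ := by nlinarith
    have h6 : φ (t⁻¹ • (y - z)) = 0 := by
      refine hφ.1 _ ?_
      rw [norm_smul, Real.norm_of_nonneg (by positivity), inv_mul_eq_div]
      exact (one_lt_div ht).2 h5
    simp [h6]
  simp [this]

lemma measurableSet_truncatedCone {n : ℕ} (x : Rn n) (β t₀ : ℝ) :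
    MeasurableSet {p : Rn n × ℝ | t₀ < p.2 ∧ dist x p.1 < β * p.2} := by
  have h1 : IsOpen {p : Rn n × ℝ | t₀ < p.2} := isOpen_lt continuous_const continuous_snd
  have h2 : IsOpen {p : Rn n × ℝ | dist x p.1 < β * p.2} := isOpen_lt (by fun_prop) (by fun_prop)
  exact h1.measurableSet.inter h2.measurableSet

/-- The integral of a power of the height over a cone truncated from below. -/
lemma lintegral_cone {n : ℕ} {s β t₀ : ℝ} (hs : 0 < s) (hβ : 0 < β) (ht₀ : 0 < t₀) (x : Rn n) :
    (∫⁻ p : Rn n × ℝ in {p : Rn n × ℝ | t₀ < p.2 ∧ dist x p.1 < β * p.2},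
        ENNReal.ofReal (p.2 ^ (-s - n - 1))) =
      ENNReal.ofReal (β ^ n * (volume (ball (0 : Rn n) 1)).toReal * (t₀ ^ (-s) / s)) := by
  have hmeas : MeasurableSet {p : Rn n × ℝ | t₀ < p.2 ∧ dist x p.1 < β * p.2} :=
    measurableSet_truncatedCone _ _ _
  rw [← lintegral_indicator hmeas, Measure.volume_eq_prod, lintegral_prod_symm']
  swap
  · exact Measurable.indicator (by fun_prop) hmeas
  have hV : volume (ball (0 : Rn n) 1) ≠ ∞ := measure_ball_lt_top.ne
  have hinner : ∀ t : ℝ, (∫⁻ y : Rn n, indicator {p : Rn n × ℝ | t₀ < p.2 ∧ dist x p.1 < β * p.2}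
        (fun p => ENNReal.ofReal (p.2 ^ (-s - n - 1))) (y, t)) =
      (Ioi t₀).indicator (fun t => ENNReal.ofReal
        (β ^ n * (volume (ball (0 : Rn n) 1)).toReal * t ^ (-s - 1))) t := by
    intro t
    by_cases ht : t₀ < t
    swap
    · rw [indicator_of_notMem (by simpa using ht)]
      simp [indicator, ht]
    have htpos : 0 < t := ht₀.trans ht
    rw [indicator_of_mem (by simpa using ht)]
    have : ∀ y : Rn n, indicator {p : Rn n × ℝ | t₀ < p.2 ∧ dist x p.1 < β * p.2}
        (fun p => ENNReal.ofReal (p.2 ^ (-s - n - 1))) (y, t) =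
        (ball x (β * t)).indicator (fun _ => ENNReal.ofReal (t ^ (-s - n - 1))) y := by
      intro y
      simp [indicator, ht, dist_comm x y]
    simp_rw [this]
    rw [lintegral_indicator measurableSet_ball, setLIntegral_const,
      Measure.addHaar_ball_of_pos _ _ (by positivity), finrank_euclideanSpace_fin,
      ← ENNReal.ofReal_toReal hV, ← ENNReal.ofReal_mul (by positivity),
      ← ENNReal.ofReal_mul (by positivity), ENNReal.toReal_ofReal (by positivity)]
    congr 1
    have : t ^ (-s - 1) = t ^ (-s - n - 1) * t ^ n := by
      rw [← Real.rpow_natCast t n, ← Real.rpow_add htpos]; congr 1; ring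
    rw [this]; ring
  simp_rw [hinner]
  rw [lintegral_indicator measurableSet_Ioi, ← ofReal_integral_eq_lintegral_ofReal]
  · rw [integral_const_mul, integral_Ioi_rpow_of_lt (by linarith) ht₀]
    congr 2
    rw [show -s - 1 + 1 = -s by ring, neg_div_neg_eq]
  · exact (integrableOn_Ioi_rpow_of_lt (by linarith) ht₀).const_mul _
  · refine (ae_restrict_iff' measurableSet_Ioi).2 (Filter.Eventually.of_forall fun t ht => ?_)
    have : 0 < t := ht₀.trans ht
    simp only [Pi.zero_apply]
    positivity

/-- **Pointwise estimate for `S_{α,2^j}(b_i)` outside `Q*`.** If `b` is integrable,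
supported in a cube `Q` with vanishing integral, then for `x ∉ Q* = 2√n·Q` and `j ∈ ℤ_+`:
`S_{α,2^j}(b)(x) ≤ C·2^{j(3n+2α)/2}·ℓ(Q)^α·|x-c|^{-(n+α)}·∫_Q |b|`. -/
theorem Sbeta_atom_far_bound (n : ℕ) (hn : 1 ≤ n) (α : ℝ) (hα : 0 < α ∧ α ≤ 1) :
    ∃ C > (0 : ℝ), ∀ (c : Rn n) (ℓ : ℝ), 0 < ℓ →
      ∀ b : Rn n → ℝ, Integrable b (volume : Measure (Rn n)) →
        (∀ z, z ∉ cube n c ℓ → b z = 0) → ((∫ z, b z) = 0) →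
        ∀ j : ℕ, 1 ≤ j → ∀ x : Rn n, x ∉ cube n c (2 * Real.sqrt n * ℓ) →
          Sbeta n α ((2 : ℝ) ^ j) b x ≤
            ENNReal.ofReal
                (C * (2 : ℝ) ^ ((j : ℝ) * (3 * n + 2 * α) / 2) * ℓ ^ α *
                  ‖x - c‖ ^ (-((n : ℝ) + α))) *
              ∫⁻ z in cube n c ℓ, ENNReal.ofReal |b z| := by
  obtain ⟨hα0, -⟩ := hα
  have hn0 : (0 : ℝ) < n := by exact_mod_cast hn
  set V : ℝ := (volume (ball (0 : Rn n) 1)).toReal with hV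
  have hVpos : 0 < V :=
    ENNReal.toReal_pos (measure_ball_pos _ _ one_pos).ne' measure_ball_lt_top.ne
  set s : ℝ := 2 * ((n : ℝ) + α) with hs
  have hspos : 0 < s := by positivity
  refine ⟨(Real.sqrt n / 2) ^ α * Real.sqrt (V / s) * 4 ^ ((n : ℝ) + α), by positivity, ?_⟩
  intro c ℓ hℓ b hb hsupp h0 j _ x hx
  have hr : 0 < ‖x - c‖ :=
    lt_of_le_of_lt (by positivity) (lt_norm_sub_of_notMem_cube hx)
  set r := ‖x - c‖
  set β : ℝ := 2 ^ j with hβ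
  have hβ1 : 1 ≤ β := one_le_pow₀ (by norm_num)
  have hβ0 : 0 < β := by positivity
  have hM : (∫⁻ z in cube n c ℓ, ENNReal.ofReal |b z|) = ∫⁻ z, ENNReal.ofReal |b z| := by
    refine setLIntegral_eq_of_support_subset fun z hz => ?_
    by_contra hzQ
    exact hz (by simp [hsupp z hzQ])
  rw [hM]
  set M := ∫⁻ z, ENNReal.ofReal |b z|
  set K : ℝ := (Real.sqrt n * ℓ / 2) ^ α with hK
  have hKpos : 0 < K := by positivity
  set t₀ : ℝ := r / (4 * β) with ht₀
  have ht₀pos : 0 < t₀ := by positivity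
  set E : Set (Rn n × ℝ) := {p | t₀ < p.2 ∧ dist x p.1 < β * p.2} with hE
  have hEmeas : MeasurableSet E :=
    measurableSet_truncatedCone _ _ _
  have hconemeas : MeasurableSet {p : Rn n × ℝ | 0 < p.2 ∧ dist x p.1 < β * p.2} :=
    measurableSet_truncatedCone _ _ _
  have hpt : ∀ p ∈ {p : Rn n × ℝ | 0 < p.2 ∧ dist x p.1 < β * p.2},
      (Aalpha n α b p.1 p.2) ^ 2 / ENNReal.ofReal (p.2 ^ (n + 1)) ≤
        E.indicator (fun p => ENNReal.ofReal (K ^ 2) * M ^ 2 *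
          ENNReal.ofReal (p.2 ^ (-s - n - 1))) p := by
    rintro ⟨y, t⟩ ⟨ht, hxy⟩
    simp only at ht hxy ⊢
    by_cases htt : t₀ < t
    swap
    · rw [Aalpha_eq_zero hβ1 hℓ hsupp hx ht hxy (not_lt.1 htt)]
      simp
    rw [indicator_of_mem (show (y, t) ∈ E from ⟨htt, hxy⟩)]
    calc (Aalpha n α b y t) ^ 2 / ENNReal.ofReal (t ^ (n + 1))
        ≤ (ENNReal.ofReal (K * t ^ (-((n : ℝ) + α))) * M) ^ 2 / ENNReal.ofReal (t ^ (n + 1)) := by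
          gcongr
          exact Aalpha_le hα0 hℓ hb hsupp h0 y ht
      _ = ENNReal.ofReal ((K * t ^ (-((n : ℝ) + α))) ^ 2 * (t ^ (n + 1))⁻¹) * M ^ 2 := by
          rw [mul_pow, div_eq_mul_inv, ← ENNReal.ofReal_inv_of_pos (by positivity),
            ← ENNReal.ofReal_pow (by positivity), ENNReal.ofReal_mul (by positivity)]
          ring
      _ = ENNReal.ofReal (K ^ 2) * M ^ 2 * ENNReal.ofReal (t ^ (-s - n - 1)) := by
          rw [mul_right_comm, ← ENNReal.ofReal_mul (by positivity)]
          congr 2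
          have h1 : (t ^ (n + 1))⁻¹ = t ^ (-((n : ℝ) + 1)) := by
            rw [Real.rpow_neg ht.le]; norm_cast
          rw [mul_pow, mul_assoc, ← Real.rpow_mul_natCast ht.le, h1, ← Real.rpow_add ht]
          congr 2
          push_cast
          rw [hs]; ring
  have hsq : (∫⁻ p : Rn n × ℝ in {p : Rn n × ℝ | 0 < p.2 ∧ dist x p.1 < β * p.2},
      (Aalpha n α b p.1 p.2) ^ 2 / ENNReal.ofReal (p.2 ^ (n + 1))) ≤
      ENNReal.ofReal (K ^ 2) * M ^ 2 * ENNReal.ofReal (β ^ n * V * (t₀ ^ (-s) / s)) := by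
    calc _ ≤ ∫⁻ p in {p : Rn n × ℝ | 0 < p.2 ∧ dist x p.1 < β * p.2},
          E.indicator (fun p => ENNReal.ofReal (K ^ 2) * M ^ 2 *
          ENNReal.ofReal (p.2 ^ (-s - n - 1))) p := setLIntegral_mono' hconemeas hpt
      _ ≤ ∫⁻ p, E.indicator (fun p => ENNReal.ofReal (K ^ 2) * M ^ 2 *
          ENNReal.ofReal (p.2 ^ (-s - n - 1))) p := setLIntegral_le_lintegral _ _
      _ = _ := by
          rw [lintegral_indicator hEmeas, lintegral_const_mul _ (by fun_prop),
            lintegral_cone hspos hβ0 ht₀pos x]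
  set C' : ℝ := (Real.sqrt n / 2) ^ α * Real.sqrt (V / s) * 4 ^ ((n : ℝ) + α) *
    (2 : ℝ) ^ ((j : ℝ) * (3 * n + 2 * α) / 2) * ℓ ^ α * r ^ (-((n : ℝ) + α)) with hC'
  have hC'pos : 0 < C' := by positivity
  have hreal : K ^ 2 * (β ^ n * V * (t₀ ^ (-s) / s)) = C' ^ 2 := by
    have e1 : K = (Real.sqrt n / 2) ^ α * ℓ ^ α := by
      rw [hK, ← Real.mul_rpow (by positivity) (by positivity)]; congr 1; ring
    have e2 : ((2 : ℝ) ^ ((j : ℝ) * (3 * n + 2 * α) / 2)) ^ 2 = β ^ n * β ^ s := by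
      rw [← Real.rpow_mul_natCast (by norm_num), hβ, ← Real.rpow_natCast 2 j,
        ← Real.rpow_mul_natCast (by norm_num), ← Real.rpow_mul (by norm_num),
        ← Real.rpow_add (by norm_num)]
      congr 1
      push_cast
      rw [hs]; ring
    have e3 : t₀ ^ (-s) = r ^ (-s) * 4 ^ s * β ^ s := by
      rw [ht₀, Real.div_rpow hr.le (by positivity), Real.rpow_neg (by positivity : 0 ≤ 4 * β),
        div_inv_eq_mul, Real.mul_rpow (by norm_num) hβ0.le, mul_assoc]
    have e4 : (r ^ (-((n : ℝ) + α))) ^ 2 = r ^ (-s) := by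
      rw [← Real.rpow_mul_natCast hr.le]; congr 1; push_cast; rw [hs]; ring
    have e5 : ((4 : ℝ) ^ ((n : ℝ) + α)) ^ 2 = 4 ^ s := by
      rw [← Real.rpow_mul_natCast (by norm_num)]; congr 1; push_cast; rw [hs]; ring
    have e6 : Real.sqrt (V / s) ^ 2 = V / s := Real.sq_sqrt (by positivity)
    rw [hC']
    simp only [mul_pow, e1, e2, e3, e4, e5, e6]
    ring
  have hfin : ENNReal.ofReal (K ^ 2) * M ^ 2 * ENNReal.ofReal (β ^ n * V * (t₀ ^ (-s) / s)) =
      (ENNReal.ofReal C' * M) ^ 2 := by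
    rw [mul_right_comm, ← ENNReal.ofReal_mul (by positivity), hreal, mul_pow (ENNReal.ofReal C') M,
      ENNReal.ofReal_pow hC'pos.le]
  rw [hfin] at hsq
  calc Sbeta n α β b x ≤ ((ENNReal.ofReal C' * M) ^ 2) ^ (1 / 2 : ℝ) :=
        ENNReal.rpow_le_rpow hsq (by norm_num)
    _ = ENNReal.ofReal C' * M := by
        rw [← ENNReal.rpow_natCast, ← ENNReal.rpow_mul]; norm_num
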